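/- Let x ∈ 𝒟⁽²⁾_{ε₁,ε₃} be well-separated with window g (O_k ∩ O_ℓ = ∅ for k ≠ ℓ) as in the context, and fix t ∈ ℝ. Suppose ε̃₁ satisfies ε̃₁ ≥ τ₀ Σ_{k=1}^K A_k(t) + σ(t) Π₀(t), where Π₀(t) = K ε₁ I₁ + (π/3) ε₃ I₃ σ(t)² Σ_{k=1}^K A_k(t) and I_n = ∫|τ^n g(τ)|dτ. Then for every η with |Ṽ_x(t,η)| > ε̃₁ there exists k ∈ {1,…,K} such that (t,η) ∈ O_k, i.e. |η − φ'_k(t)| < α_k(t)/σ(t). -/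

import Mathlib

/-!
If `η` lies outside every zone `O_k`, then `|σ(t)(η - φ_k'(t))| ≥ α_k(t)` for all `k`, so evenness and
monotonicity of `|G_k|` give `|G_k(σ(t)(η - φ_k'(t)))| ≤ τ₀`. After the change of variables `τ = σ(t)u`
the transform of the `k`-th component is an integral against `g`. Replacing that component by its
frozen-amplitude quadratic-phase model
`A_k(t) exp(2πi(φ_k(t) + φ_k'(t)τ + φ_k''(t)τ²/2))` turns this integral into
`x_k(t) G_k(σ(t)(η - φ_k'(t)))`, of modulus at most `τ₀ A_k(t)`. By the mean value inequality for `A_k`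
and Taylor's formula for `φ_k`, the replacement changes the integrand by at most
`(ε₁|τ| + (π/3) ε₃ A_k(t) |τ|³) |g(u)|` (`component_approx`). Summing over `k` bounds the transform
of `x` by `τ₀ ∑ A_k(t) + σ(t) Π₀(t)`, which is at most `ε̃₁`.
-/

open MeasureTheory Real Set Filter
open scoped Topology Real

noncomputable section

/-- `e2πi θ = exp(2πiθ)`. -/
def e2πi (θ : ℝ) : ℂ := Complex.exp (2 * (π : ℂ) * (θ : ℂ) * Complex.I)

/-- Fourier transform with the convention `ŵ(ξ) = ∫ w(u) e^{-2πiξu} du`. -/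
def ft (w : ℝ → ℂ) (ξ : ℝ) : ℂ := ∫ u : ℝ, w u * e2πi (-(ξ * u))

/-- The adaptive STFT with window `w` and time-varying parameter `σ`. -/
def adSTFT (σ : ℝ → ℝ) (w : ℝ → ℂ) (x : ℝ → ℂ) (t η : ℝ) : ℂ :=
  ∫ τ : ℝ, x (t + τ) * ((σ t : ℂ))⁻¹ * w (τ / σ t) * e2πi (-(η * τ))

/-- Absolute moments `I_n = ∫ |τ^n w(τ)| dτ`. -/
def absMom (w : ℝ → ℂ) (n : ℕ) : ℝ := ∫ τ : ℝ, |τ| ^ n * ‖w τ‖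

/-- The window `g₁(u) = u g(u)`. -/
def g1w (g : ℝ → ℂ) : ℝ → ℂ := fun u => (u : ℂ) * g u

/-- The window `g₂(u) = u² g(u)`. -/
def g2w (g : ℝ → ℂ) : ℝ → ℂ := fun u => (u : ℂ) ^ 2 * g u

/-- The window `g₃(u) = u g'(u)`. -/
def g3w (g : ℝ → ℂ) : ℝ → ℂ := fun u => (u : ℂ) * deriv g u

/-- `∂_t` of the adaptive STFT. -/
def adSTFTt (σ : ℝ → ℝ) (w : ℝ → ℂ) (x : ℝ → ℂ) (t η : ℝ) : ℂ :=
  deriv (fun s => adSTFT σ w x s η) t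

/-- `∂_η` of the adaptive STFT. -/
def adSTFTη (σ : ℝ → ℝ) (w : ℝ → ℂ) (x : ℝ → ℂ) (t η : ℝ) : ℂ :=
  deriv (fun η' => adSTFT σ w x t η') η

/-- The complex phase transformation `ω^{adp,c}` of the adaptive FSST. -/
def omegaC (σ : ℝ → ℝ) (g x : ℝ → ℂ) (t η : ℝ) : ℂ :=
  adSTFTt σ g x t η / (2 * (π : ℂ) * Complex.I * adSTFT σ g x t η)
  + ((deriv σ t : ℝ) : ℂ) / (2 * (π : ℂ) * Complex.I * (σ t : ℂ))
  + ((deriv σ t / σ t : ℝ) : ℂ) * adSTFT σ (g3w g) x t η /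
      (2 * (π : ℂ) * Complex.I * adSTFT σ g x t η)

/-- The (real) phase transformation `ω^{adp}` of the adaptive FSST. -/
def omegaAdp (σ : ℝ → ℝ) (g x : ℝ → ℂ) (t η : ℝ) : ℝ :=
  (adSTFTt σ g x t η / (2 * (π : ℂ) * Complex.I * adSTFT σ g x t η)).re
  + (deriv σ t / σ t) *
      (adSTFT σ (g3w g) x t η / (2 * (π : ℂ) * Complex.I * adSTFT σ g x t η)).re

/-- The quantity `P₀(t,η)` of the second-order adaptive FSST. -/
def P0 (σ : ℝ → ℝ) (g x : ℝ → ℂ) (t η : ℝ) : ℂ :=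
  (deriv (fun η' => adSTFTt σ g x t η' / adSTFT σ g x t η') η
    + ((deriv σ t / σ t : ℝ) : ℂ) *
        deriv (fun η' => adSTFT σ (g3w g) x t η' / adSTFT σ g x t η') η)
  / deriv (fun η' => adSTFT σ (g1w g) x t η' / adSTFT σ g x t η') η

/-- The complex second-order phase transformation `ω^{adp,2nd,c}`. -/
def omega2C (σ : ℝ → ℝ) (g x : ℝ → ℂ) (t η : ℝ) : ℂ :=
  ((deriv σ t : ℝ) : ℂ) / (2 * (π : ℂ) * Complex.I * (σ t : ℂ))
  + adSTFTt σ g x t η / (2 * (π : ℂ) * Complex.I * adSTFT σ g x t η)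
  - adSTFT σ (g1w g) x t η / (2 * (π : ℂ) * Complex.I * adSTFT σ g x t η) * P0 σ g x t η
  + ((deriv σ t / σ t : ℝ) : ℂ) * adSTFT σ (g3w g) x t η /
      (2 * (π : ℂ) * Complex.I * adSTFT σ g x t η)

/-- The (real) second-order phase transformation `ω^{adp,2nd}`. -/
def omega2 (σ : ℝ → ℝ) (g x : ℝ → ℂ) (t η : ℝ) : ℝ := (omega2C σ g x t η).re

/-- The adaptive FSST `R^{adp,λ}_{x,γ}`. -/
def fsst (σ : ℝ → ℝ) (g x : ℝ → ℂ) (h : ℝ → ℝ) (γ lam t ξ : ℝ) : ℂ :=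
  ∫ η in {η : ℝ | γ < ‖adSTFT σ g x t η‖},
    adSTFT σ g x t η * ((lam⁻¹ * h ((ξ - omegaAdp σ g x t η) / lam) : ℝ) : ℂ)

/-- The second-order adaptive FSST `R^{adp,2nd,λ}_{x,γ₁,γ₂}`. -/
def fsst2 (σ : ℝ → ℝ) (g x : ℝ → ℂ) (h : ℝ → ℝ) (γ₁ γ₂ lam t ξ : ℝ) : ℂ :=
  ∫ η in {η : ℝ | γ₁ < ‖adSTFT σ g x t η‖ ∧
      γ₂ < ‖deriv (fun η' => adSTFT σ (g1w g) x t η' / adSTFT σ g x t η') η‖},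
    adSTFT σ g x t η * ((lam⁻¹ * h ((ξ - omega2 σ g x t η) / lam) : ℝ) : ℂ)

/-- The chirp kernel `G^w_ℓ(t,η)` associated with linear phase `a` and chirp rate `b`. -/
def chirpG (σ : ℝ → ℝ) (w : ℝ → ℂ) (a b : ℝ) (t η : ℝ) : ℂ :=
  ∫ τ : ℝ, e2πi (a * τ + b * τ ^ 2 / 2) * ((σ t : ℂ))⁻¹ * w (τ / σ t) * e2πi (-(η * τ))

/-- The Fourier transform of the chirped window `e^{iπru²} w(u)`. -/
def chirpFT (r : ℝ) (w : ℝ → ℂ) (ξ : ℝ) : ℂ :=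
  ∫ u : ℝ, e2πi (r * u ^ 2 / 2) * w u * e2πi (-(ξ * u))

/-- The residual `err^w(t,η) = Ṽ^w_x(t,η) - Σ_ℓ x_ℓ(t) G^w_ℓ(t,η)`. -/
def errW (σ : ℝ → ℝ) (w : ℝ → ℂ) (K : ℕ) (A φ : Fin K → ℝ → ℝ) (x : ℝ → ℂ)
    (t η : ℝ) : ℂ :=
  adSTFT σ w x t η - ∑ ℓ, (A ℓ t : ℂ) * e2πi (φ ℓ t) *
    chirpG σ w (deriv (φ ℓ) t) (deriv (deriv (φ ℓ)) t) t η

/-- The quantity `Err₁` of the second-order analysis. -/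
def Err1 (σ : ℝ → ℝ) (g x : ℝ → ℂ) (K : ℕ) (A φ : Fin K → ℝ → ℝ) (k : Fin K)
    (t η : ℝ) : ℂ :=
  2 * (π : ℂ) * Complex.I *
      (∑ ℓ ∈ Finset.univ.erase k, (A ℓ t : ℂ) * e2πi (φ ℓ t) *
        ((deriv (φ ℓ) t - deriv (φ k) t : ℝ) : ℂ) *
        chirpG σ g (deriv (φ ℓ) t) (deriv (deriv (φ ℓ)) t) t η)
  + 2 * (π : ℂ) * Complex.I * (σ t : ℂ) *
      (∑ ℓ ∈ Finset.univ.erase k, (A ℓ t : ℂ) * e2πi (φ ℓ t) *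
        ((deriv (deriv (φ ℓ)) t - deriv (deriv (φ k)) t : ℝ) : ℂ) *
        chirpG σ (g1w g) (deriv (φ ℓ) t) (deriv (deriv (φ ℓ)) t) t η)
  + 2 * (π : ℂ) * Complex.I * ((η - deriv (φ k) t : ℝ) : ℂ) * errW σ g K A φ x t η
  - errW σ (deriv g) K A φ x t η / (σ t : ℂ)
  - 2 * (π : ℂ) * Complex.I * ((deriv (deriv (φ k)) t : ℝ) : ℂ) * (σ t : ℂ) *
      errW σ (g1w g) K A φ x t η

/-- The quantity `Err₂` of the second-order analysis. -/
def Err2 (σ : ℝ → ℝ) (g x : ℝ → ℂ) (K : ℕ) (A φ : Fin K → ℝ → ℝ) (k : Fin K)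
    (t η : ℝ) : ℂ :=
  4 * (π : ℂ) ^ 2 * (σ t : ℂ) *
      (∑ ℓ ∈ Finset.univ.erase k, (A ℓ t : ℂ) * e2πi (φ ℓ t) *
        ((deriv (φ ℓ) t - deriv (φ k) t : ℝ) : ℂ) *
        chirpG σ (g1w g) (deriv (φ ℓ) t) (deriv (deriv (φ ℓ)) t) t η)
  + 4 * (π : ℂ) ^ 2 * (σ t : ℂ) ^ 2 *
      (∑ ℓ ∈ Finset.univ.erase k, (A ℓ t : ℂ) * e2πi (φ ℓ t) *
        ((deriv (deriv (φ ℓ)) t - deriv (deriv (φ k)) t : ℝ) : ℂ) *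
        chirpG σ (g2w g) (deriv (φ ℓ) t) (deriv (deriv (φ ℓ)) t) t η)
  + 2 * (π : ℂ) * Complex.I * errW σ g K A φ x t η
  + 4 * (π : ℂ) ^ 2 * ((η - deriv (φ k) t : ℝ) : ℂ) * (σ t : ℂ) * errW σ (g1w g) K A φ x t η
  + 2 * (π : ℂ) * Complex.I * errW σ (g3w g) K A φ x t η
  - 4 * (π : ℂ) ^ 2 * ((deriv (deriv (φ k)) t : ℝ) : ℂ) * (σ t : ℂ) ^ 2 *
      errW σ (g2w g) K A φ x t η

/-- The quantity `Err₃` of the second-order analysis. -/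
def Err3 (σ : ℝ → ℝ) (g x : ℝ → ℂ) (K : ℕ) (A φ : Fin K → ℝ → ℝ) (k : Fin K)
    (t η : ℝ) : ℂ :=
  (adSTFT σ g x t η * Err2 σ g x K A φ k t η
    - adSTFTη σ g x t η * Err1 σ g x K A φ k t η)
  / (adSTFT σ g x t η * adSTFTη σ (g1w g) x t η
    - adSTFT σ (g1w g) x t η * adSTFTη σ g x t η)

/-! ### The unimodular exponential -/

theorem norm_e2πi (θ : ℝ) : ‖e2πi θ‖ = 1 := by
  have : (2 * (π : ℂ) * (θ : ℂ) * Complex.I) = ((2 * π * θ : ℝ) : ℂ) * Complex.I := by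
    push_cast; ring
  rw [e2πi, this, Complex.norm_exp_ofReal_mul_I]

theorem e2πi_add (a b : ℝ) : e2πi (a + b) = e2πi a * e2πi b := by
  rw [e2πi, e2πi, e2πi, ← Complex.exp_add]
  congr 1
  push_cast
  ring

theorem continuous_e2πi : Continuous e2πi := by
  unfold e2πi
  fun_prop

theorem norm_e2πi_sub_le (a b : ℝ) : ‖e2πi a - e2πi b‖ ≤ 2 * π * |a - b| := by
  have h1 : e2πi a - e2πi b = e2πi b * (e2πi (a - b) - 1) := by
    rw [mul_sub, ← e2πi_add, add_sub_cancel, mul_one]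
  have h2 : e2πi (a - b) = Complex.exp (Complex.I * ((2 * π * (a - b) : ℝ) : ℂ)) := by
    rw [e2πi]
    congr 1
    push_cast
    ring
  rw [h1, norm_mul, norm_e2πi, one_mul, h2]
  refine Real.norm_exp_I_mul_ofReal_sub_one_le.trans (le_of_eq ?_)
  rw [Real.norm_eq_abs, abs_mul, abs_of_pos Real.two_pi_pos]

/-! ### Taylor estimates for amplitude and phase -/

/-- One integration step of Taylor's estimate: a bound of order `n` on the derivative gives a bound
of order `n + 1` on a function vanishing at `0`. -/
theorem abs_le_of_abs_deriv_le {F F' : ℝ → ℝ} (hF : ∀ s, HasDerivAt F (F' s) s) (h0 : F 0 = 0)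
    {C : ℝ} {n : ℕ} (hb : ∀ s, |F' s| ≤ C * |s| ^ n) (s : ℝ) :
    |F s| ≤ C / (n + 1) * |s| ^ (n + 1) := by
  have hn : (n : ℝ) + 1 ≠ 0 := by positivity
  have hB : ∀ y : ℝ, HasDerivAt (fun y => C / (n + 1) * y ^ (n + 1)) (C * y ^ n) y := by
    intro y
    refine ((hasDerivAt_pow (n + 1) y).const_mul (C / (n + 1))).congr_deriv ?_
    push_cast
    field_simp
  -- The statement on the half-line `0 ≤ s`; the case `s < 0` follows by reflection.
  have key : ∀ H H' : ℝ → ℝ, (∀ s, HasDerivAt H (H' s) s) → H 0 = 0 →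
      (∀ s, |H' s| ≤ C * |s| ^ n) → ∀ r, 0 ≤ r → |H r| ≤ C / (n + 1) * r ^ (n + 1) := by
    intro H H' hH hH0 hHb r hr
    have := image_norm_le_of_norm_deriv_right_le_deriv_boundary (f := H) (f' := H') (a := 0) (b := r)
      (fun y _ => (hH y).continuousAt.continuousWithinAt)
      (fun y _ => (hH y).hasDerivWithinAt) (B := fun y => C / (n + 1) * y ^ (n + 1))
      (B' := fun y => C * y ^ n) (by simp [hH0]) hB
      (fun y hy => by simpa [abs_of_nonneg hy.1] using hHb y) (right_mem_Icc.2 hr)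
    simpa using this
  rcases le_total 0 s with hs | hs
  · rw [abs_of_nonneg hs]
    exact key F F' hF h0 hb s hs
  · rw [abs_of_nonpos hs]
    have := key (fun y => F (-y)) (fun y => -F' (-y)) (fun y => by
      
      exact ((hF (-y)).comp y (hasDerivAt_neg y)).congr_deriv (by ring)) (by simpa using h0)
      (fun y => by simpa using hb (-y)) (-s) (by linarith)
    simpa using this

/-- Second-order Taylor expansion with the sharp constant `1/6` in the remainder. -/
theorem taylor_two_bound {f : ℝ → ℝ} (hf : ContDiff ℝ 3 f) {C : ℝ}
    (hC : ∀ s, |deriv (deriv (deriv f)) s| ≤ C) (t τ : ℝ) :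
    |f (t + τ) - (f t + (deriv f t * τ + deriv (deriv f) t * τ ^ 2 / 2))| ≤ C / 6 * |τ| ^ 3 := by
  have hf1 : ContDiff ℝ 2 (deriv f) := (contDiff_succ_iff_deriv (n := 2)).1 hf |>.2.2
  have hf2 : ContDiff ℝ 1 (deriv (deriv f)) := (contDiff_succ_iff_deriv (n := 1)).1 hf1 |>.2.2
  have d0 : ∀ s, HasDerivAt (fun s => f (t + s)) (deriv f (t + s)) s := fun s =>
    ((hf.differentiable (by norm_num)) (t + s)).hasDerivAt.comp_const_add t s
  have d1 : ∀ s, HasDerivAt (fun s => deriv f (t + s)) (deriv (deriv f) (t + s)) s := fun s =>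
    ((hf1.differentiable (by norm_num)) (t + s)).hasDerivAt.comp_const_add t s
  have d2 : ∀ s, HasDerivAt (fun s => deriv (deriv f) (t + s))
      (deriv (deriv (deriv f)) (t + s)) s := fun s =>
    ((hf2.differentiable (by norm_num)) (t + s)).hasDerivAt.comp_const_add t s
  have b2 := abs_le_of_abs_deriv_le (C := C) (n := 0)
    (fun s => (d2 s).sub_const (deriv (deriv f) t)) (by simp) (fun s => by simpa using hC (t + s))
  have b1 := abs_le_of_abs_deriv_le (F := fun s => deriv f (t + s) - (deriv f t + deriv (deriv f) t * s))
    (fun s => ((d1 s).sub (((hasDerivAt_id s).const_mul (deriv (deriv f) t)).const_add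
      (deriv f t))).congr_deriv (by rw [mul_one])) (by simp) b2
  have b0 := abs_le_of_abs_deriv_le
    (F := fun s => f (t + s) - (f t + (deriv f t * s + deriv (deriv f) t * s ^ 2 / 2)))
    (fun s => ((d0 s).sub ((((hasDerivAt_id s).const_mul (deriv f t)).add
      (((hasDerivAt_pow 2 s).const_mul (deriv (deriv f) t)).div_const 2)).const_add
      (f t))).congr_deriv (by simp; ring)) (by simp) b1 τ
  refine b0.trans (le_of_eq ?_)
  push_cast
  ring

/-- Error of the frozen-amplitude quadratic-phase model of a single component. -/
theorem component_approx {A φ : ℝ → ℝ} (hA2 : ContDiff ℝ 2 A) (hφ3 : ContDiff ℝ 3 φ)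
    {ε₁ ε₃ : ℝ} (hA' : ∀ s, |deriv A s| ≤ ε₁) (hφ''' : ∀ s, |deriv (deriv (deriv φ)) s| ≤ ε₃)
    (t τ : ℝ) (hA : 0 < A t) :
    ‖(A (t + τ) : ℂ) * e2πi (φ (t + τ)) - (A t : ℂ) *
      e2πi (φ t + (deriv φ t * τ + deriv (deriv φ) t * τ ^ 2 / 2))‖
      ≤ ε₁ * |τ| + A t * (π / 3 * ε₃ * |τ| ^ 3) := by
  have hAd : |A (t + τ) - A t| ≤ ε₁ * |τ| := by
    have := abs_le_of_abs_deriv_le (C := ε₁) (n := 0) (F := fun s => A (t + s) - A t)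
      (fun s => (((hA2.differentiable (by norm_num)) (t + s)).hasDerivAt.comp_const_add t s).sub_const
        (A t)) (by simp) (fun s => by simpa using hA' (t + s)) τ
    simpa using this
  have h : (A (t + τ) : ℂ) * e2πi (φ (t + τ)) - (A t : ℂ) *
      e2πi (φ t + (deriv φ t * τ + deriv (deriv φ) t * τ ^ 2 / 2))
      = ((A (t + τ) - A t : ℝ) : ℂ) * e2πi (φ (t + τ)) + (A t : ℂ) * (e2πi (φ (t + τ)) -
      e2πi (φ t + (deriv φ t * τ + deriv (deriv φ) t * τ ^ 2 / 2))) := by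
    push_cast; ring
  rw [h]
  refine (norm_add_le _ _).trans (add_le_add ?_ ?_)
  · rw [norm_mul, norm_e2πi, mul_one, Complex.norm_real]
    exact hAd
  · rw [norm_mul, Complex.norm_real, Real.norm_eq_abs, abs_of_pos hA]
    refine mul_le_mul_of_nonneg_left ?_ hA.le
    refine (norm_e2πi_sub_le _ _).trans ?_
    have := mul_le_mul_of_nonneg_left (taylor_two_bound hφ3 hφ''' t τ) Real.two_pi_pos.le
    refine this.trans (le_of_eq ?_)
    ring

/-! ### The transform of a single component -/

/-- The adaptive STFT in the rescaled variable `u = τ / σ(t)`. -/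
theorem adSTFT_eq (σ : ℝ → ℝ) (w x : ℝ → ℂ) (t η : ℝ) (h : 0 < σ t) :
    adSTFT σ w x t η = ∫ u : ℝ, x (t + σ t * u) * (w u * e2πi (-(η * (σ t * u)))) := by
  have hc : (σ t : ℂ) ≠ 0 := by exact_mod_cast h.ne'
  have key := Measure.integral_comp_div
    (fun u : ℝ => x (t + σ t * u) * (w u * e2πi (-(η * (σ t * u))))) (σ t)
  have e : adSTFT σ w x t η = (σ t : ℂ)⁻¹ * ∫ τ : ℝ, x (t + σ t * (τ / σ t)) *
      (w (τ / σ t) * e2πi (-(η * (σ t * (τ / σ t))))) := by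
    rw [adSTFT, ← integral_const_mul]
    congr 1
    funext τ
    rw [mul_div_cancel₀ τ h.ne']
    ring
  rw [e, key, abs_of_pos h, Complex.real_smul, inv_mul_cancel_left₀ hc]

/-- A product of a bounded continuous function with the window and a modulation is integrable. -/
theorem integrable_mul_window (g : SchwartzMap ℝ ℂ) {f : ℝ → ℂ} (hf : Continuous f) {C : ℝ}
    (hC : ∀ u, ‖f u‖ ≤ C) (c : ℝ → ℝ) (hc : Continuous c) :
    Integrable (fun u : ℝ => f u * (g u * e2πi (c u))) := by
  have h1 : Integrable (fun u : ℝ => g u * e2πi (c u)) := by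
    simpa [mul_comm] using Integrable.bdd_mul (c := 1) (g.integrable (μ := volume))
      (continuous_e2πi.comp hc).aestronglyMeasurable
      (Eventually.of_forall fun u => (norm_e2πi _).le)
  exact h1.bdd_mul hf.aestronglyMeasurable (Eventually.of_forall hC)

/-- The model of a single component integrates to a multiple of the chirp transform evaluated at
`σ(η - φ'(t))`. -/
theorem integral_model (g : ℝ → ℂ) (A p a b s η : ℝ) :
    ∫ u : ℝ, ((A : ℂ) * e2πi (p + (a * (s * u) + b * (s * u) ^ 2 / 2))) *
      (g u * e2πi (-(η * (s * u))))
      = (A : ℂ) * e2πi p * chirpFT (b * s ^ 2) g (s * (η - a)) := by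
  rw [chirpFT, ← integral_const_mul]
  congr 1
  funext u
  have h : e2πi (p + (a * (s * u) + b * (s * u) ^ 2 / 2)) * e2πi (-(η * (s * u)))
      = e2πi p * (e2πi (b * s ^ 2 * u ^ 2 / 2) * e2πi (-(s * (η - a) * u))) := by
    rw [← e2πi_add, ← e2πi_add, ← e2πi_add]
    congr 1
    ring
  linear_combination (A : ℂ) * g u * h

/-- Contribution of one component to the transform, when the chirp transform is at most `τ₀` at the
relevant frequency. -/
theorem component_bound (g : SchwartzMap ℝ ℂ) {A φ : ℝ → ℝ} (hA2 : ContDiff ℝ 2 A)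
    (hAbdd : ∃ C, ∀ s, |A s| ≤ C) (hφ3 : ContDiff ℝ 3 φ)
    {ε₁ ε₃ : ℝ} (hA' : ∀ s, |deriv A s| ≤ ε₁) (hφ''' : ∀ s, |deriv (deriv (deriv φ)) s| ≤ ε₃)
    (t η s τ₀ : ℝ) (hs : 0 < s) (hA : 0 < A t)
    (hG : ‖chirpFT (deriv (deriv φ) t * s ^ 2) g (s * (η - deriv φ t))‖ ≤ τ₀) :
    Integrable (fun u : ℝ => ((A (t + s * u) : ℂ) * e2πi (φ (t + s * u))) *
      (g u * e2πi (-(η * (s * u))))) ∧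
    ‖∫ u : ℝ, ((A (t + s * u) : ℂ) * e2πi (φ (t + s * u))) * (g u * e2πi (-(η * (s * u))))‖
      ≤ τ₀ * A t + s * (ε₁ * absMom g 1 + π / 3 * ε₃ * absMom g 3 * s ^ 2 * A t) := by
  obtain ⟨C, hC⟩ := hAbdd
  have hAc := hA2.continuous
  have hφc := hφ3.continuous
  have i1 := integrable_mul_window g
    (f := fun u => (A (t + s * u) : ℂ) * e2πi (φ (t + s * u)))
    ((Complex.continuous_ofReal.comp (by fun_prop)).mul (continuous_e2πi.comp (by fun_prop)))
    (C := C) (fun u => by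
      rw [norm_mul, norm_e2πi, mul_one, Complex.norm_real]
      exact hC _) (fun u => -(η * (s * u))) (by fun_prop)
  have i2 := integrable_mul_window g
    (f := fun u => (A t : ℂ) * e2πi
      (φ t + (deriv φ t * (s * u) + deriv (deriv φ) t * (s * u) ^ 2 / 2)))
    (continuous_const.mul (continuous_e2πi.comp (by fun_prop)))
    (C := C) (fun u => by
      rw [norm_mul, norm_e2πi, mul_one, Complex.norm_real]
      exact hC _) (fun u => -(η * (s * u))) (by fun_prop)
  refine ⟨i1, ?_⟩
  have m1 : Integrable (fun u : ℝ => |u| ^ 1 * ‖g u‖) := g.integrable_pow_mul volume 1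
  have m3 : Integrable (fun u : ℝ => |u| ^ 3 * ‖g u‖) := g.integrable_pow_mul volume 3
  have hdiff := norm_integral_le_of_norm_le
    ((m1.const_mul (ε₁ * s)).add (m3.const_mul (A t * (π / 3 * ε₃ * s ^ 3))))
    (f := fun u : ℝ => ((A (t + s * u) : ℂ) * e2πi (φ (t + s * u))) *
        (g u * e2πi (-(η * (s * u)))) - ((A t : ℂ) * e2πi
      (φ t + (deriv φ t * (s * u) + deriv (deriv φ) t * (s * u) ^ 2 / 2))) *
        (g u * e2πi (-(η * (s * u))))) (Eventually.of_forall fun u => by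
      have := component_approx hA2 hφ3 hA' hφ''' t (s * u) hA
      rw [← sub_mul, norm_mul, norm_mul, norm_e2πi, mul_one]
      refine (mul_le_mul_of_nonneg_right this (norm_nonneg _)).trans (le_of_eq ?_)
      rw [abs_mul, abs_of_pos hs]
      simp only [Pi.add_apply]
      ring)
  rw [integral_sub i1 i2, integral_model] at hdiff
  have hmom : (∫ u : ℝ, (ε₁ * s * (|u| ^ 1 * ‖g u‖) +
      A t * (π / 3 * ε₃ * s ^ 3) * (|u| ^ 3 * ‖g u‖)))
      = ε₁ * s * absMom g 1 + A t * (π / 3 * ε₃ * s ^ 3) * absMom g 3 := by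
    rw [integral_add (m1.const_mul _) (m3.const_mul _), integral_const_mul, integral_const_mul,
      absMom, absMom]
  simp only [Pi.add_apply] at hdiff
  rw [hmom] at hdiff
  have hmain : ‖(A t : ℂ) * e2πi (φ t) *
      chirpFT (deriv (deriv φ) t * s ^ 2) g (s * (η - deriv φ t))‖ ≤ τ₀ * A t := by
    rw [norm_mul, norm_mul, norm_e2πi, mul_one, Complex.norm_real, Real.norm_eq_abs,
      abs_of_pos hA, mul_comm]
    exact mul_le_mul_of_nonneg_right hG hA.le
  have := norm_le_norm_add_norm_sub' (∫ u : ℝ, ((A (t + s * u) : ℂ) * e2πi (φ (t + s * u))) *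
    (g u * e2πi (-(η * (s * u))))) ((A t : ℂ) * e2πi (φ t) *
      chirpFT (deriv (deriv φ) t * s ^ 2) g (s * (η - deriv φ t)))
  refine this.trans ((add_le_add hmain hdiff).trans (le_of_eq ?_))
  ring

theorem statement17
    (K : ℕ) (hK : 0 < K)
    (A φ : Fin K → ℝ → ℝ)
    (hA2 : ∀ k, ContDiff ℝ 2 (A k))
    (hAbdd : ∀ k, ∃ C, ∀ s, |A k s| ≤ C)
    (hφ3 : ∀ k, ContDiff ℝ 3 (φ k))
    (hφ''bdd : ∀ k, ∃ C, ∀ s, |deriv (deriv (φ k)) s| ≤ C)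
    (hApos : ∀ k s, 0 < A k s)
    (hφ'bd : ∀ k, ∃ c C : ℝ, 0 < c ∧ (∀ s, c ≤ deriv (φ k) s) ∧ ∀ s, deriv (φ k) s ≤ C)
    (hsep : ∃ d, 0 < d ∧ ∀ (j : ℕ) (hj : j + 1 < K) (s : ℝ),
      d ≤ deriv (φ ⟨j + 1, hj⟩) s - deriv (φ ⟨j, Nat.lt_of_succ_lt hj⟩) s)
    (ε₁ ε₃ : ℝ) (hε₁ : 0 < ε₁) (hε₃pos : 0 < ε₃)
    (hA' : ∀ k s, |deriv (A k) s| ≤ ε₁)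
    (hφ''' : ∀ k s, |deriv (deriv (deriv (φ k))) s| ≤ ε₃)
    (g : SchwartzMap ℝ ℂ) (hg0 : g 0 ≠ 0)
    (σ : ℝ → ℝ) (hσ : ContDiff ℝ 1 σ) (hσpos : ∀ s, 0 < σ s)
    (x : ℝ → ℂ) (hx : ∀ s, x s = ∑ k, (A k s : ℂ) * e2πi (φ k s))
    (τ₀ : ℝ) (hτ₀ : 0 < τ₀) (hτ₀1 : τ₀ < 1)
    (αk : Fin K → ℝ → ℝ) (hαkpos : ∀ k s, 0 < αk k s)
    (hαksol : ∀ k s, ‖chirpFT (deriv (deriv (φ k)) s * (σ s) ^ 2) (⇑g) (αk k s)‖ = τ₀)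
    (hGeven : ∀ k s ξ, ‖chirpFT (deriv (deriv (φ k)) s * (σ s) ^ 2) (⇑g) (-ξ)‖ =
      ‖chirpFT (deriv (deriv (φ k)) s * (σ s) ^ 2) (⇑g) ξ‖)
    (hGdec : ∀ k s, AntitoneOn
      (fun ξ => ‖chirpFT (deriv (deriv (φ k)) s * (σ s) ^ 2) (⇑g) ξ‖) (Set.Ici 0))
    (hwellsep : ∀ k ℓ : Fin K, k ≠ ℓ → ∀ (s η : ℝ),
      |η - deriv (φ k) s| < αk k s / σ s → ¬ |η - deriv (φ ℓ) s| < αk ℓ s / σ s)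
    (Pi₀ : ℝ → ℝ)
    (hPi₀ : ∀ s, Pi₀ s = K * ε₁ * absMom (⇑g) 1 +
      (π / 3) * ε₃ * absMom (⇑g) 3 * (σ s) ^ 2 * ∑ k, A k s)
    (t εtilde₁ : ℝ)
    (hεt₁ : τ₀ * (∑ k, A k t) + σ t * Pi₀ t ≤ εtilde₁) :
    ∀ η : ℝ, εtilde₁ < ‖adSTFT σ (⇑g) x t η‖ →
      ∃ k : Fin K, |η - deriv (φ k) t| < αk k t / σ t := by
  intro η hη
  by_contra! hcon
  refine absurd hη (not_lt.2 (le_trans ?_ hεt₁))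
  have hs := hσpos t
  have hG : ∀ k, ‖chirpFT (deriv (deriv (φ k)) t * (σ t) ^ 2) (⇑g)
      (σ t * (η - deriv (φ k) t))‖ ≤ τ₀ := by
    intro k
    have hle : αk k t ≤ |σ t * (η - deriv (φ k) t)| := by
      rw [abs_mul, abs_of_pos hs, mul_comm]
      exact (div_le_iff₀ hs).1 (hcon k)
    have h1 := hGdec k t (mem_Ici.2 (hαkpos k t).le) (mem_Ici.2 (abs_nonneg _)) hle
    simp only [hαksol] at h1
    rcases abs_choice (σ t * (η - deriv (φ k) t)) with h | h
    · rwa [h] at h1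
    · rwa [h, hGeven] at h1
  have hcomp := fun k => component_bound g (hA2 k) (hAbdd k) (hφ3 k) (hA' k) (hφ''' k) t η (σ t) τ₀
    hs (hApos k t) (hG k)
  have hsum : adSTFT σ (⇑g) x t η = ∑ k, ∫ u : ℝ,
      ((A k (t + σ t * u) : ℂ) * e2πi (φ k (t + σ t * u))) *
        (g u * e2πi (-(η * (σ t * u)))) := by
    rw [adSTFT_eq σ _ _ t η hs, ← integral_finsetSum _ fun k _ => (hcomp k).1]
    congr 1
    funext u
    rw [hx, Finset.sum_mul]
  rw [hsum]
  refine (norm_sum_le_of_le _ fun k _ => (hcomp k).2).trans (le_of_eq ?_)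
  rw [Finset.sum_add_distrib, ← Finset.mul_sum, ← Finset.mul_sum, Finset.sum_add_distrib,
    Finset.sum_const, ← Finset.mul_sum, hPi₀, Finset.card_univ, Fintype.card_fin, nsmul_eq_mul]
  ring

end
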